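/- arXiv:2401.00760 — 2 statements merged into one kernel-verified Lean document; each statement's English description precedes it below -/
import Mathlib

section
/- Suppose g ∈ k[x,y] is reducible over k. Then g factors as g = H1·H2 where either (A) H1 = y² + (a1x² + a2x + a3) and H2 = y² + (−4x⁴ + a4x³ + a5x² + a6x + a7) for some a1,…,a7 ∈ k, or (B) H1 = y² + (2x² + a1x + a2)y + (a3x³ + a4x² + a5x + a6) and H2 = y² + (−2x² − a1x − a2)y + (a3x³ + a4x² + a5x + a6) for some a1,…,a6 ∈ k. -/
open MvPolynomial

/-!
Since `g` is even in `y`, it is `y⁴ + p y² + q` with `p, q ∈ k[x]`, a monic quartic over the domain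
`k[x]`. A linear factor `y + r` yields the root `r²` of `t² + p t + q`, and comparing coefficients
in a product of two quadratics shows that `t² + p t + q` splits as `(t + u)(t + v)` or that the
factors are `y² ± a y + b`. So `(p, q)` is either `(u + v, u v)` or `(2b - a², b²)`. The degrees of
`u, v, a, b` are then forced: `deg q ≤ 6` is less than `2 deg p = 8`, which in the first case
excludes `deg u = deg v`, and in the second makes `2b` negligible against `a²`.
-/

open Polynomial (natDegree leadingCoeff natDegree_mul natDegree_pow)
open Polynomial.Bivariate (equivMvPolynomial)
open scoped Polynomial

section Biquadratic

variable {R : Type*} [CommRing R]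

/-- The biquadratic polynomial `X⁴ + p X² + q`; for `R = k[x]` and `X = y`, the sextic `g` has this
shape. -/
noncomputable def biquadratic (p q : R) : R[X] :=
  Polynomial.X ^ 4 + Polynomial.C p * Polynomial.X ^ 2 + Polynomial.C q

lemma isMonicOfDegree_biquadratic [Nontrivial R] (p q : R) :
    (biquadratic p q).IsMonicOfDegree 4 := by
  refine ⟨?_, ?_⟩ <;> unfold biquadratic
  · compute_degree!
  · monicity!

lemma biquadratic_add_mul (u v : R) :
    biquadratic (u + v) (u * v) =
      (Polynomial.X ^ 2 + Polynomial.C u) * (Polynomial.X ^ 2 + Polynomial.C v) := by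
  simp only [biquadratic, map_add, map_mul]
  ring

lemma biquadratic_two_mul_sub_sq_sq (a b : R) :
    biquadratic (2 * b - a ^ 2) (b ^ 2) =
      (Polynomial.X ^ 2 + Polynomial.C a * Polynomial.X + Polynomial.C b) *
        (Polynomial.X ^ 2 - Polynomial.C a * Polynomial.X + Polynomial.C b) := by
  simp only [biquadratic, map_sub, map_mul, map_pow, Polynomial.C_ofNat]
  ring

lemma exists_eq_add_eq_mul_of_X_add_C_dvd_biquadratic {p q r : R}
    (h : Polynomial.X + Polynomial.C r ∣ biquadratic p q) : ∃ u v, p = u + v ∧ q = u * v := by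
  have hroot : r ^ 4 + p * r ^ 2 + q = 0 := by
    rw [← sub_neg_eq_add, ← Polynomial.C_neg, Polynomial.dvd_iff_isRoot] at h
    simpa [biquadratic, Even.neg_pow (by decide : Even 4)] using h
  exact ⟨-r ^ 2, p + r ^ 2, by ring, by linear_combination hroot⟩

lemma coeffs_of_quadratic_mul_quadratic_eq_biquadratic {a b c d p q : R}
    (h : (Polynomial.X ^ 2 + Polynomial.C a * Polynomial.X + Polynomial.C b) *
      (Polynomial.X ^ 2 + Polynomial.C c * Polynomial.X + Polynomial.C d) = biquadratic p q) :
    c = -a ∧ p = b + d + a * c ∧ a * d + b * c = 0 ∧ q = b * d := by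
  have hdiff : Polynomial.C (a + c) * Polynomial.X ^ 3
      + Polynomial.C (b + d + a * c - p) * Polynomial.X ^ 2
      + Polynomial.C (a * d + b * c) * Polynomial.X + Polynomial.C (b * d - q) = 0 := by
    rw [biquadratic] at h
    simp only [map_add, map_sub, map_mul]
    linear_combination h
  have hcoeff (n : ℕ) := congrArg (Polynomial.coeff · n) hdiff
  simp only [Polynomial.coeff_add, Polynomial.coeff_C_mul, Polynomial.coeff_X_pow,
    Polynomial.coeff_X, Polynomial.coeff_C, Polynomial.coeff_zero] at hcoeff
  have h0 : b * d - q = 0 := by simpa using hcoeff 0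
  have h1 : a * d + b * c = 0 := by simpa using hcoeff 1
  have h2 : b + d + a * c - p = 0 := by simpa using hcoeff 2
  have h3 : a + c = 0 := by simpa using hcoeff 3
  exact ⟨by linear_combination h3, by linear_combination -h2, h1, by linear_combination -h0⟩

variable [IsDomain R]

theorem exists_of_not_irreducible_biquadratic {p q : R} (h : ¬ Irreducible (biquadratic p q)) :
    (∃ u v, p = u + v ∧ q = u * v) ∨ ∃ a b, p = 2 * b - a ^ 2 ∧ q = b ^ 2 := by
  have hpq := isMonicOfDegree_biquadratic p q
  have hne : biquadratic p q ≠ 1 := fun h1 ↦ by simpa [h1] using hpq.natDegree_eq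
  rw [hpq.monic.irreducible_iff_lt_natDegree_lt hne, hpq.natDegree_eq] at h
  push Not at h
  obtain ⟨f, hf, hdeg, s, hs⟩ := h
  obtain hf1 | hf2 : f.natDegree = 1 ∨ f.natDegree = 2 := by
    rw [Finset.mem_Ioc] at hdeg
    omega
  · obtain ⟨r, rfl⟩ := Polynomial.isMonicOfDegree_one_iff.mp ⟨hf1, hf⟩
    exact .inl (exists_eq_add_eq_mul_of_X_add_C_dvd_biquadratic ⟨s, hs⟩)
  · have hs2 : s.IsMonicOfDegree 2 := .of_mul_left (p := f) (m := 2) ⟨hf2, hf⟩ (hs ▸ hpq)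
    obtain ⟨a, b, rfl⟩ := Polynomial.isMonicOfDegree_two_iff.mp ⟨hf2, hf⟩
    obtain ⟨c, d, rfl⟩ := Polynomial.isMonicOfDegree_two_iff.mp hs2
    obtain ⟨rfl, rfl, hlin, rfl⟩ := coeffs_of_quadratic_mul_quadratic_eq_biquadratic hs.symm
    have hsplit : a * (d - b) = 0 := by linear_combination hlin
    obtain rfl | hdb := mul_eq_zero.mp hsplit
    · exact .inl ⟨b, d, by ring, rfl⟩
    · obtain rfl : d = b := sub_eq_zero.mp hdb
      exact .inr ⟨a, d, by ring, by ring⟩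

end Biquadratic

section Degree

section Semiring

variable {R : Type*} [Semiring R] [NoZeroDivisors R] {u v : R[X]}

lemma natDegree_lt_natDegree_of_natDegree_mul_lt (hle : u.natDegree ≤ v.natDegree)
    (h : (u * v).natDegree < 2 * (u + v).natDegree) : u.natDegree < v.natDegree := by
  refine hle.lt_of_ne fun heq ↦ ?_
  have hadd : (u + v).natDegree ≤ v.natDegree := by
    simpa [heq] using Polynomial.natDegree_add_le u v
  have hu : u ≠ 0 := by
    rintro rfl
    rw [Polynomial.natDegree_zero] at heq
    omega
  have hv : v ≠ 0 := by
    rintro rfl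
    rw [Polynomial.natDegree_zero] at hadd
    omega
  rw [natDegree_mul hu hv] at h
  omega

lemma natDegree_le_natDegree_mul_sub (hlt : u.natDegree < v.natDegree) :
    u.natDegree ≤ (u * v).natDegree - v.natDegree := by
  obtain rfl | hu := eq_or_ne u 0
  · simp
  · have hv : v ≠ 0 := Polynomial.ne_zero_of_natDegree_gt hlt
    rw [natDegree_mul hu hv, Nat.add_sub_cancel]

end Semiring

variable {R : Type*} [Ring R] {a b : R[X]}

lemma natDegree_sq_of_natDegree_lt_sub_sq (h : b.natDegree < (b - a ^ 2).natDegree) :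
    (a ^ 2).natDegree = (b - a ^ 2).natDegree := by
  conv_lhs => rw [← sub_sub_self b (a ^ 2)]
  exact Polynomial.natDegree_sub_eq_right_of_natDegree_lt h

lemma leadingCoeff_sq_of_natDegree_lt_sub_sq [NoZeroDivisors R]
    (h : b.natDegree < (b - a ^ 2).natDegree) :
    a.leadingCoeff ^ 2 = -(b - a ^ 2).leadingCoeff := by
  rw [← Polynomial.leadingCoeff_pow, ← Polynomial.leadingCoeff_sub_of_degree_lt'
    (Polynomial.degree_lt_degree h), sub_sub_self]

end Degree

section Bivariate

variable {R : Type*} [CommRing R]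

lemma equivMvPolynomial_C_eq_sum_range {n : ℕ} {p : R[X]} (hp : p.natDegree < n) :
    equivMvPolynomial R (Polynomial.C p) = ∑ i ∈ Finset.range n, C (p.coeff i) * X 0 ^ i := by
  conv_lhs => rw [p.as_sum_range_C_mul_X_pow' hp]
  simp only [map_sum, map_mul, map_pow, Polynomial.Bivariate.equivMvPolynomial_C_C,
    Polynomial.Bivariate.equivMvPolynomial_C_X]

variable [IsDomain R]

lemma exists_equivMvPolynomial_biquadratic_add_mul_eq {u v : R[X]} (hdeg : (u + v).natDegree = 4)
    (hmul : (u * v).natDegree ≤ 6) :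
    ∃ a1 a2 a3 a4 a5 a6 a7 : R, equivMvPolynomial R (biquadratic (u + v) (u * v)) =
      (X 1 ^ 2 + (C a1 * X 0 ^ 2 + C a2 * X 0 + C a3))
        * (X 1 ^ 2 + (C (u + v).leadingCoeff * X 0 ^ 4 + C a4 * X 0 ^ 3 + C a5 * X 0 ^ 2
            + C a6 * X 0 + C a7)) := by
  wlog hle : u.natDegree ≤ v.natDegree generalizing u v
  · simpa only [add_comm v, mul_comm v] using
      this (by rwa [add_comm]) (by rwa [mul_comm]) (le_of_not_ge hle)
  have hlt : u.natDegree < v.natDegree :=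
    natDegree_lt_natDegree_of_natDegree_mul_lt hle (by omega)
  have hv : v.natDegree = 4 := by
    rw [← hdeg, Polynomial.natDegree_add_eq_right_of_natDegree_lt hlt]
  have hu : u.natDegree ≤ 2 := (natDegree_le_natDegree_mul_sub hlt).trans (by omega)
  have hlead : (u + v).leadingCoeff = v.coeff 4 := by
    rw [Polynomial.leadingCoeff_add_of_degree_lt (Polynomial.degree_lt_degree hlt), leadingCoeff,
      hv]
  refine ⟨u.coeff 2, u.coeff 1, u.coeff 0, v.coeff 3, v.coeff 2, v.coeff 1, v.coeff 0, ?_⟩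
  rw [biquadratic_add_mul, hlead, map_mul, map_add, map_add, map_pow,
    Polynomial.Bivariate.equivMvPolynomial_X,
    equivMvPolynomial_C_eq_sum_range (n := 3) (by omega),
    equivMvPolynomial_C_eq_sum_range (n := 5) (by omega)]
  simp only [Finset.sum_range_succ, Finset.sum_range_zero]
  ring

lemma exists_equivMvPolynomial_biquadratic_two_mul_sub_sq_sq_eq {a b : R[X]} {c : R}
    (hdeg : (2 * b - a ^ 2).natDegree = 4) (hlead : (2 * b - a ^ 2).leadingCoeff = -c ^ 2)
    (hsq : (b ^ 2).natDegree ≤ 6) :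
    ∃ a1 a2 a3 a4 a5 a6 : R, equivMvPolynomial R (biquadratic (2 * b - a ^ 2) (b ^ 2)) =
      (X 1 ^ 2 + (C c * X 0 ^ 2 + C a1 * X 0 + C a2) * X 1
          + (C a3 * X 0 ^ 3 + C a4 * X 0 ^ 2 + C a5 * X 0 + C a6))
        * (X 1 ^ 2 + (C (-c) * X 0 ^ 2 - C a1 * X 0 - C a2) * X 1
          + (C a3 * X 0 ^ 3 + C a4 * X 0 ^ 2 + C a5 * X 0 + C a6)) := by
  have hb : b.natDegree ≤ 3 := by
    rw [natDegree_pow] at hsq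
    omega
  have hlt : (2 * b).natDegree < (2 * b - a ^ 2).natDegree := by
    have : (2 * b).natDegree ≤ b.natDegree := by
      simpa only [Polynomial.C_ofNat] using Polynomial.natDegree_C_mul_le (2 : R) b
    omega
  have ha : a.natDegree = 2 := by
    have := natDegree_sq_of_natDegree_lt_sub_sq hlt
    rw [natDegree_pow] at this
    omega
  have hac : a.coeff 2 = c ∨ a.coeff 2 = -c := by
    rw [← sq_eq_sq_iff_eq_or_eq_neg, ← neg_neg (c ^ 2), ← hlead,
      ← leadingCoeff_sq_of_natDegree_lt_sub_sq hlt, leadingCoeff, ha]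
  wlog hc : a.coeff 2 = c generalizing a
  · rw [← neg_sq a] at hdeg hlead hlt ⊢
    have hneg : (-a).coeff 2 = c := by
      rw [Polynomial.coeff_neg, hac.resolve_left hc, neg_neg]
    exact this hdeg hlead hlt (by rwa [Polynomial.natDegree_neg]) (.inl hneg) hneg
  subst hc
  refine ⟨a.coeff 1, a.coeff 0, b.coeff 3, b.coeff 2, b.coeff 1, b.coeff 0, ?_⟩
  rw [biquadratic_two_mul_sub_sq_sq]
  simp only [map_mul, map_add, map_sub, map_pow, Polynomial.Bivariate.equivMvPolynomial_X,
    equivMvPolynomial_C_eq_sum_range (show a.natDegree < 3 by omega),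
    equivMvPolynomial_C_eq_sum_range (show b.natDegree < 4 by omega),
    Finset.sum_range_succ, Finset.sum_range_zero, map_neg (C : R →+* MvPolynomial (Fin 2) R)]
  ring

end Bivariate

/-- The constants `-4` and `2` of the sextic become `-c²` and `c`. -/
theorem stmt_3_general {R : Type*} [CommRing R] [IsDomain R] {c : R} (hc : c ≠ 0)
    (b60 b50 b42 b40 b32 b30 b22 b20 b12 b10 b02 b00 : R) (hb42 : b42 = -c ^ 2)
    (g : MvPolynomial (Fin 2) R)
    (hg : g = C b60 * X 0 ^ 6 + C b42 * X 0 ^ 4 * X 1 ^ 2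
      + C b50 * X 0 ^ 5 + C b32 * X 0 ^ 3 * X 1 ^ 2
      + C b40 * X 0 ^ 4 + C b22 * X 0 ^ 2 * X 1 ^ 2 + X 1 ^ 4
      + C b30 * X 0 ^ 3 + C b12 * X 0 * X 1 ^ 2
      + C b20 * X 0 ^ 2 + C b02 * X 1 ^ 2 + C b10 * X 0 + C b00)
    (hred : ¬ Irreducible g) :
    (∃ a1 a2 a3 a4 a5 a6 a7 : R,
      g = (X 1 ^ 2 + (C a1 * X 0 ^ 2 + C a2 * X 0 + C a3))
        * (X 1 ^ 2 + (C b42 * X 0 ^ 4 + C a4 * X 0 ^ 3 + C a5 * X 0 ^ 2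
            + C a6 * X 0 + C a7)))
    ∨ (∃ a1 a2 a3 a4 a5 a6 : R,
      g = (X 1 ^ 2 + (C c * X 0 ^ 2 + C a1 * X 0 + C a2) * X 1
            + (C a3 * X 0 ^ 3 + C a4 * X 0 ^ 2 + C a5 * X 0 + C a6))
        * (X 1 ^ 2 + (C (-c) * X 0 ^ 2 - C a1 * X 0 - C a2) * X 1
            + (C a3 * X 0 ^ 3 + C a4 * X 0 ^ 2 + C a5 * X 0 + C a6))) := by
  have hb42_ne : b42 ≠ 0 := hb42 ▸ neg_ne_zero.mpr (pow_ne_zero 2 hc)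
  obtain ⟨p, q, hdeg, hlead, hq, rfl⟩ : ∃ p q : R[X], p.natDegree = 4 ∧ p.leadingCoeff = b42 ∧
      q.natDegree ≤ 6 ∧ g = equivMvPolynomial R (biquadratic p q) := by
    let p : R[X] := .C b42 * .X ^ 4 + .C b32 * .X ^ 3 + .C b22 * .X ^ 2 + .C b12 * .X + .C b02
    let q : R[X] := .C b60 * .X ^ 6 + .C b50 * .X ^ 5 + .C b40 * .X ^ 4 + .C b30 * .X ^ 3
      + .C b20 * .X ^ 2 + .C b10 * .X + .C b00
    have hdeg : p.natDegree = 4 := by simp only [p]; compute_degree!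
    refine ⟨p, q, hdeg, ?_, by simp only [q]; compute_degree, ?_⟩
    · rw [leadingCoeff, hdeg]; simp only [p]; compute_degree!
    · simp only [hg, biquadratic, p, q, map_add, map_mul, map_pow,
        Polynomial.Bivariate.equivMvPolynomial_C_C, Polynomial.Bivariate.equivMvPolynomial_C_X,
        Polynomial.Bivariate.equivMvPolynomial_X]
      ring
  rw [MulEquiv.irreducible_iff (equivMvPolynomial R)] at hred
  obtain ⟨u, v, rfl, rfl⟩ | ⟨a, b, rfl, rfl⟩ := exists_of_not_irreducible_biquadratic hred
  · exact .inl (hlead ▸ exists_equivMvPolynomial_biquadratic_add_mul_eq hdeg hq)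
  · have hlead_sq := hlead.trans hb42
    exact .inr (exists_equivMvPolynomial_biquadratic_two_mul_sub_sq_sq_eq hdeg hlead_sq hq)

/-- Factorization patterns of the bivariate sextic g: if g is reducible over k,
then g = H1·H2 with (H1, H2) of type (A) or of type (B). -/
theorem stmt_3 {k : Type*} [Field k] (hchar : ringChar k ≠ 2)
    (b60 b50 b42 b40 b32 b30 b22 b20 b12 b10 b04 b02 b00 : k)
    (hb42 : b42 = -4) (hb04 : b04 = 1)
    (g : MvPolynomial (Fin 2) k)
    (hg : g = C b60 * X 0 ^ 6 + C b42 * X 0 ^ 4 * X 1 ^ 2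
      + C b50 * X 0 ^ 5 + C b32 * X 0 ^ 3 * X 1 ^ 2
      + C b40 * X 0 ^ 4 + C b22 * X 0 ^ 2 * X 1 ^ 2 + C b04 * X 1 ^ 4
      + C b30 * X 0 ^ 3 + C b12 * X 0 * X 1 ^ 2
      + C b20 * X 0 ^ 2 + C b02 * X 1 ^ 2 + C b10 * X 0 + C b00)
    (hnz : ¬ (b60 = 0 ∧ b40 = 0 ∧ b20 = 0 ∧ b00 = 0))
    (hred : ¬ Irreducible g) :
    (∃ a1 a2 a3 a4 a5 a6 a7 : k,
      g = (X 1 ^ 2 + (C a1 * X 0 ^ 2 + C a2 * X 0 + C a3))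
        * (X 1 ^ 2 + (C (-4 : k) * X 0 ^ 4 + C a4 * X 0 ^ 3 + C a5 * X 0 ^ 2
            + C a6 * X 0 + C a7)))
    ∨ (∃ a1 a2 a3 a4 a5 a6 : k,
      g = (X 1 ^ 2 + (C 2 * X 0 ^ 2 + C a1 * X 0 + C a2) * X 1
            + (C a3 * X 0 ^ 3 + C a4 * X 0 ^ 2 + C a5 * X 0 + C a6))
        * (X 1 ^ 2 + (C (-2 : k) * X 0 ^ 2 - C a1 * X 0 - C a2) * X 1
            + (C a3 * X 0 ^ 3 + C a4 * X 0 ^ 2 + C a5 * X 0 + C a6))) := by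
  subst hb42 hb04
  exact stmt_3_general (Ring.two_ne_zero hchar) b60 b50 (-4) b40 b32 b30 b22 b20 b12 b10 b02 b00
    (by norm_num) g (by rwa [C_1, one_mul] at hg) hred
end

section
/- The singular locus Sing of the projective sextic F = 0 is exactly {(0:1:0)} ∪ S∞ ∪ {(ξ:0:1) : ξ ∈ k, h1(ξ) = 0}, where S∞ = {(1:0:0)} if σ1 = τ1 and S∞ = ∅ otherwise. -/
open MvPolynomial

/-!
Write `s = φ₁ + φ₂` and `d = φ₂ - φ₁`, so that `F = y⁴z² - 2Sy² + D²`, where `S` and `D` are the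
homogenizations of `s` and `d` in degrees `4` and `3`. Modulo `y²` this is the square `D²`, so a
point of the line `y = 0` is singular exactly when `D` vanishes there, and `D` vanishes at
`(1 : 0 : 0)` exactly when `d` has no cubic term. Off this line and off `z = 0`, the equation
`F_y = 0` gives `y² = s(x)`; then `F = 0` and `F_x = 0` say that `x` is a double root of
`s² - d² = 4φ₁φ₂`, whose roots are simple. On `z = 0` one has `F_y = -4S y` with `S = 2x⁴`, which
leaves only `(0 : 1 : 0)` off the line `y = 0`.
-/

section Homogeneous

variable {σ R : Type*} [CommSemiring R]

lemma aeval_smul_of_isHomogeneous {S : Type*} [CommSemiring S] [Algebra R S]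
    {F : MvPolynomial σ R} {m : ℕ} (hF : F.IsHomogeneous m) (c : S) (v : σ → S) :
    aeval (c • v) F = c ^ m * aeval v F := by
  simp only [aeval_def, eval₂_eq, Finset.mul_sum]
  refine Finset.sum_congr rfl fun d hd => ?_
  simp only [Pi.smul_apply, smul_eq_mul, mul_pow, Finset.prod_mul_distrib,
    Finset.prod_pow_eq_pow_sum, hF.degree_eq_sum_deg_support hd]
  ring

lemma eval_smul_of_isHomogeneous {F : MvPolynomial σ R} {m : ℕ} (hF : F.IsHomogeneous m)
    (c : R) (v : σ → R) : eval (c • v) F = c ^ m * eval v F := by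
  simpa only [aeval_eq_eval] using aeval_smul_of_isHomogeneous hF c v

end Homogeneous

lemma aeval_eq_pow_mul_aeval_snoc_one {R K : Type*} [CommSemiring R] [Field K] [Algebra R K]
    {n m : ℕ} {F : MvPolynomial (Fin (n + 1)) R} (hF : F.IsHomogeneous m) {v : Fin (n + 1) → K}
    (hv : v (Fin.last n) ≠ 0) :
    aeval v F = v (Fin.last n) ^ m * aeval (fun i : Fin n => v i.castSucc / v (Fin.last n))
      (aeval (Fin.snoc X 1 : Fin (n + 1) → MvPolynomial (Fin n) R) F) := by
  rw [← AlgHom.comp_apply, comp_aeval, ← aeval_smul_of_isHomogeneous hF]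
  congr 2
  funext i
  refine Fin.lastCases ?_ (fun j => ?_) i
  · simp
  · simp [mul_div_cancel₀ _ hv]

lemma eq_of_isHomogeneous_of_aeval_snoc_one_eq {R : Type*} [CommRing R] [IsDomain R] {n m : ℕ}
    {F G : MvPolynomial (Fin (n + 1)) R} (hF : F.IsHomogeneous m) (hG : G.IsHomogeneous m)
    (h : aeval (Fin.snoc X 1 : Fin (n + 1) → MvPolynomial (Fin n) R) F = aeval (Fin.snoc X 1) G) :
    F = G := by
  let K := FractionRing (MvPolynomial (Fin (n + 1)) R)
  have hgeneric (P : MvPolynomial (Fin (n + 1)) R) :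
      algebraMap _ K P = aeval (algebraMap (MvPolynomial (Fin (n + 1)) R) K ∘ X) P := by
    rw [aeval_algebraMap_apply, aeval_X_left_apply]
  have hlast : (algebraMap (MvPolynomial (Fin (n + 1)) R) K ∘ X) (Fin.last n) ≠ 0 := by simp
  apply IsFractionRing.injective _ K
  rw [hgeneric, hgeneric, aeval_eq_pow_mul_aeval_snoc_one hF hlast,
    aeval_eq_pow_mul_aeval_snoc_one hG hlast, h]

section Singular

variable {σ R : Type*} [CommSemiring R]

/-- `v` is a zero of `F` at which every partial derivative of `F` vanishes. -/
def IsSingularZero (F : MvPolynomial σ R) (v : σ → R) : Prop :=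
  eval v F = 0 ∧ ∀ i, eval v (pderiv i F) = 0

lemma isSingularZero_smul_iff [NoZeroDivisors R] {F : MvPolynomial σ R} {m : ℕ}
    (hF : F.IsHomogeneous m) {c : R} (hc : c ≠ 0) {v : σ → R} :
    IsSingularZero F (c • v) ↔ IsSingularZero F v := by
  have := nontrivial_of_ne c 0 hc
  simp only [IsSingularZero, eval_smul_of_isHomogeneous hF, eval_smul_of_isHomogeneous hF.pderiv,
    mul_eq_zero, pow_ne_zero _ hc, false_or]

/-- The singular locus of the projective hypersurface cut out by the form `F`, read off on the
representatives chosen by `Projectivization.rep`. -/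
def singularLocus {k : Type*} [Field k] (F : MvPolynomial σ k) :
    Set (Projectivization k (σ → k)) :=
  {P | IsSingularZero F P.rep}

lemma mk_mem_singularLocus_iff {k : Type*} [Field k] {F : MvPolynomial σ k} {m : ℕ}
    (hF : F.IsHomogeneous m) {v : σ → k} (hv : v ≠ 0) :
    Projectivization.mk k v hv ∈ singularLocus F ↔ IsSingularZero F v := by
  obtain ⟨a, ha⟩ := Projectivization.exists_smul_eq_mk_rep k v hv
  rw [singularLocus, Set.mem_ofPred_eq, ← ha, Units.smul_def, isSingularZero_smul_iff hF a.ne_zero]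

end Singular

section XZForm

variable {R : Type*} [CommSemiring R]

/-- The binary form `∑ i ≤ n, p.coeff i * x ^ i * z ^ (n - i)` in the first and last of the three
homogeneous coordinates `(x : y : z)`. -/
noncomputable def xzForm (p : Polynomial R) (n : ℕ) : MvPolynomial (Fin 3) R :=
  rename ![0, 2] (p.homogenize n)

lemma isHomogeneous_xzForm (p : Polynomial R) (n : ℕ) : (xzForm p n).IsHomogeneous n :=
  (Polynomial.isHomogeneous_homogenize p).rename_isHomogeneous

variable {p : Polynomial R} {n : ℕ}

lemma aeval_xzForm_of_eq_one {A : Type*} [CommSemiring A] [Algebra R A] (hn : p.natDegree ≤ n)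
    {v : Fin 3 → A} (hv : v 2 = 1) : aeval v (xzForm p n) = Polynomial.aeval (v 0) p := by
  rw [xzForm, aeval_rename, Polynomial.aeval_homogenize_of_eq_one hn _ (by simpa using hv)]
  rfl

lemma eval_xzForm_of_eq_one (hn : p.natDegree ≤ n) {v : Fin 3 → R} (hv : v 2 = 1) :
    eval v (xzForm p n) = p.eval (v 0) := by
  simpa only [aeval_eq_eval, Polynomial.coe_aeval_eq_eval] using aeval_xzForm_of_eq_one hn hv

lemma eval_xzForm_of_eq_zero {v : Fin 3 → R} (hv : v 2 = 0) :
    eval v (xzForm p n) = p.coeff n * v 0 ^ n := by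
  rw [xzForm, eval_rename, Polynomial.homogenize, map_sum, Finset.sum_eq_single (n, 0)]
  · simp [eval_monomial, Finsupp.prod_fintype]
  · rintro ⟨i, j⟩ hij hne
    have hj : j ≠ 0 := by
      rintro rfl
      simp_all
    simp [eval_monomial, Finsupp.prod_fintype, hv, hj]
  · simp

lemma pderiv_one_xzForm (p : Polynomial R) (n : ℕ) : pderiv 1 (xzForm p n) = 0 := by
  classical
  refine pderiv_eq_zero_of_notMem_vars fun h => ?_
  obtain ⟨i, -, hi⟩ := mem_vars_rename ![0, 2] (p.homogenize n) h
  fin_cases i <;> simp at hi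

lemma derivative_aeval_X_one (G : MvPolynomial (Fin 2) R) :
    Polynomial.derivative (aeval ![(Polynomial.X : Polynomial R), 1] G) =
      aeval ![Polynomial.X, 1] (pderiv 0 G) := by
  induction G using MvPolynomial.induction_on with
  | C a => simp
  | add G H hG hH => simp only [map_add, hG, hH]
  | mul_X G i hG => fin_cases i <;> simp [hG, pderiv_X, mul_comm]

lemma pderiv_zero_homogenize (hn : p.natDegree ≤ n) :
    pderiv 0 (p.homogenize n) = p.derivative.homogenize (n - 1) := by
  refine (Polynomial.homogenize_eq_of_isHomogeneous p.isHomogeneous_homogenize.pderiv ?_).symm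
  rw [← derivative_aeval_X_one, Polynomial.aeval_homogenize_X_one p hn]

lemma pderiv_zero_xzForm (hn : p.natDegree ≤ n) :
    pderiv 0 (xzForm p n) = xzForm p.derivative (n - 1) := by
  rw [xzForm, xzForm, ← pderiv_zero_homogenize hn,
    ← pderiv_rename (f := (![0, 2] : Fin 2 → Fin 3)) (by decide)]
  rfl

lemma pderiv_two_xzForm (p : Polynomial R) (n : ℕ) :
    pderiv 2 (xzForm p n) = rename ![0, 2] (pderiv 1 (p.homogenize n)) :=
  pderiv_rename (f := ![0, 2]) (by decide) 1 _

lemma eval_pderiv_xzForm_eq_zero (hp : p.natDegree ≤ n) (hn : 2 ≤ n) {v : Fin 3 → R}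
    (hx : v 0 = 0) (hz : v 2 = 0) (i : Fin 3) : eval v (pderiv i (xzForm p n)) = 0 := by
  have hv : v ∘ ![0, 2] = (0 : R) • (0 : Fin 2 → R) := by
    funext i
    fin_cases i <;> simp [hx, hz]
  have hn1 : n - 1 ≠ 0 := by lia
  match i with
  | 0 => simp [pderiv_zero_xzForm hp, eval_xzForm_of_eq_zero hz, hx, hn1]
  | 1 => simp [pderiv_one_xzForm]
  | 2 =>
    rw [pderiv_two_xzForm, eval_rename, hv,
      eval_smul_of_isHomogeneous p.isHomogeneous_homogenize.pderiv, zero_pow hn1, zero_mul]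

end XZForm

section Biquadratic

variable {R : Type*} [CommRing R] {s d : Polynomial R} {v : Fin 3 → R}

/-- The projective sextic `y ^ 4 * z ^ 2 - 2 * S * y ^ 2 + D ^ 2`, where `S` and `D` are the forms
of degrees `4` and `3` in `(x, z)` associated with `s` and `d`; its affine equation is
`y ^ 4 - 2 * s(x) * y ^ 2 + d(x) ^ 2`. -/
noncomputable def biquadraticSextic (s d : Polynomial R) : MvPolynomial (Fin 3) R :=
  X 1 ^ 4 * X 2 ^ 2 - C 2 * xzForm s 4 * X 1 ^ 2 + xzForm d 3 ^ 2

lemma isHomogeneous_biquadraticSextic : (biquadraticSextic s d).IsHomogeneous 6 := by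
  refine .add (.sub ?_ ?_) ?_
  · exact (isHomogeneous_X_pow 1 4).mul (isHomogeneous_X_pow 2 2)
  · exact ((isHomogeneous_xzForm s 4).C_mul 2).mul (isHomogeneous_X_pow 1 2)
  · exact (isHomogeneous_xzForm d 3).pow 2

lemma aeval_biquadraticSextic_of_eq_one {A : Type*} [CommRing A] [Algebra R A]
    (hs : s.natDegree ≤ 4) (hd : d.natDegree ≤ 3) {v : Fin 3 → A} (hv : v 2 = 1) :
    aeval v (biquadraticSextic s d) =
      v 1 ^ 4 - 2 * Polynomial.aeval (v 0) s * v 1 ^ 2 + Polynomial.aeval (v 0) d ^ 2 := by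
  simp [biquadraticSextic, aeval_xzForm_of_eq_one hs hv, aeval_xzForm_of_eq_one hd hv, hv,
    map_ofNat (algebraMap R A) 2]

lemma eq_biquadraticSextic [IsDomain R] (hs : s.natDegree ≤ 4) (hd : d.natDegree ≤ 3)
    {F : MvPolynomial (Fin 3) R} (hF : F.IsHomogeneous 6)
    (hFf : aeval ![(X 0 : MvPolynomial (Fin 2) R), X 1, 1] F =
      X 1 ^ 4 - C 2 * s.toMvPolynomial 0 * X 1 ^ 2 + d.toMvPolynomial 0 ^ 2) :
    F = biquadraticSextic s d := by
  have hsnoc : (![X 0, X 1, 1] : Fin 3 → MvPolynomial (Fin 2) R) = Fin.snoc X 1 := by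
    funext i
    fin_cases i <;> rfl
  refine eq_of_isHomogeneous_of_aeval_snoc_one_eq hF isHomogeneous_biquadraticSextic ?_
  rw [← hsnoc, hFf, aeval_biquadraticSextic_of_eq_one hs hd rfl]
  rfl

lemma eval_biquadraticSextic : eval v (biquadraticSextic s d) =
    v 1 ^ 4 * v 2 ^ 2 - 2 * eval v (xzForm s 4) * v 1 ^ 2 + eval v (xzForm d 3) ^ 2 := by
  simp [biquadraticSextic]

lemma eval_pderiv_biquadraticSextic (i : Fin 3) : eval v (pderiv i (biquadraticSextic s d)) =
    2 * (eval v (xzForm d 3) * eval v (pderiv i (xzForm d 3)) -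
      eval v (pderiv i (xzForm s 4)) * v 1 ^ 2 +
      2 * v 1 * (v 1 ^ 2 * v 2 ^ 2 - eval v (xzForm s 4)) * eval v (pderiv i (X 1)) +
      v 1 ^ 4 * v 2 * eval v (pderiv i (X 2))) := by
  simp only [biquadraticSextic, map_add, map_sub, Derivation.leibniz, Derivation.leibniz_pow,
    derivation_C, smul_eq_mul, nsmul_eq_mul, map_mul, map_pow, map_natCast, map_zero, eval_X,
    eval_C]
  push_cast
  ring

lemma eval_pderiv_zero_biquadraticSextic : eval v (pderiv 0 (biquadraticSextic s d)) =
    2 * (eval v (xzForm d 3) * eval v (pderiv 0 (xzForm d 3)) -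
      eval v (pderiv 0 (xzForm s 4)) * v 1 ^ 2) := by
  simp [eval_pderiv_biquadraticSextic, pderiv_X]

lemma eval_pderiv_one_biquadraticSextic : eval v (pderiv 1 (biquadraticSextic s d)) =
    2 * (2 * v 1 * (v 1 ^ 2 * v 2 ^ 2 - eval v (xzForm s 4))) := by
  simp [eval_pderiv_biquadraticSextic, pderiv_X, pderiv_one_xzForm]

lemma isSingularZero_biquadraticSextic_iff_of_y_eq_zero [IsReduced R] (hy : v 1 = 0) :
    IsSingularZero (biquadraticSextic s d) v ↔ eval v (xzForm d 3) = 0 := by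
  simp +contextual [IsSingularZero, eval_biquadraticSextic, eval_pderiv_biquadraticSextic, hy]

lemma isSingularZero_biquadraticSextic_of_x_eq_zero_of_z_eq_zero (hs : s.natDegree ≤ 4)
    (hx : v 0 = 0) (hz : v 2 = 0) : IsSingularZero (biquadraticSextic s d) v := by
  simp [IsSingularZero, eval_biquadraticSextic, eval_pderiv_biquadraticSextic,
    eval_xzForm_of_eq_zero, eval_pderiv_xzForm_eq_zero hs, hx, hz]

variable [IsDomain R] [NeZero (2 : R)]

lemma x_eq_zero_or_y_eq_zero_of_isSingularZero_biquadraticSextic (hs : s.natDegree = 4)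
    (hz : v 2 = 0) (h : IsSingularZero (biquadraticSextic s d) v) : v 0 = 0 ∨ v 1 = 0 := by
  have hs4 : s.coeff 4 ≠ 0 := Polynomial.coeff_ne_zero_of_eq_degree
    ((Polynomial.degree_eq_iff_natDegree_eq_of_pos (by decide)).2 hs)
  have hFy := h.2 1
  rw [eval_pderiv_one_biquadraticSextic, eval_xzForm_of_eq_zero hz] at hFy
  simpa [hz, hs4, two_ne_zero, or_comm] using hFy

lemma y_eq_zero_of_isSingularZero_biquadraticSextic (hs : s.natDegree ≤ 4) (hd : d.natDegree ≤ 3)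
    (hsep : (s ^ 2 - d ^ 2).Separable) (hz : v 2 = 1)
    (h : IsSingularZero (biquadraticSextic s d) v) : v 1 = 0 := by
  by_contra hy
  have hF := h.1
  have hFx := h.2 0
  have hFy := h.2 1
  rw [eval_biquadraticSextic, eval_xzForm_of_eq_one hs hz, eval_xzForm_of_eq_one hd hz, hz] at hF
  rw [eval_pderiv_zero_biquadraticSextic, pderiv_zero_xzForm hs, pderiv_zero_xzForm hd,
    eval_xzForm_of_eq_one hd hz,
    eval_xzForm_of_eq_one (s.natDegree_derivative_le.trans (by lia)) hz,
    eval_xzForm_of_eq_one (d.natDegree_derivative_le.trans (by lia)) hz] at hFx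
  rw [eval_pderiv_one_biquadraticSextic, eval_xzForm_of_eq_one hs hz, hz] at hFy
  have hy2 : v 1 ^ 2 = s.eval (v 0) := by
    simpa [hy, two_ne_zero, sub_eq_zero] using hFy
  have hroot : (s ^ 2 - d ^ 2).eval (v 0) = 0 := by
    simp only [Polynomial.eval_sub, Polynomial.eval_pow]
    linear_combination (v 1 ^ 2 - s.eval (v 0)) * hy2 - hF
  refine hsep.eval₂_derivative_ne_zero (RingHom.id R) hroot ?_
  simp only [Polynomial.eval₂_id, Polynomial.derivative_sub, Polynomial.derivative_sq,
    Polynomial.eval_sub, Polynomial.eval_mul, Polynomial.eval_C]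
  linear_combination - hFx - 2 * s.derivative.eval (v 0) * hy2

end Biquadratic

section ProjectivePlane

variable {k : Type*} [Field k]

lemma projectivePlane_cases (P : Projectivization k (Fin 3 → k)) :
    (∃ x y, P = .mk k ![x, y, 1] (fun h => by simpa using congrFun h 2)) ∨
      (∃ y, P = .mk k ![1, y, 0] (fun h => by simpa using congrFun h 0)) ∨
      P = .mk k ![0, 1, 0] (fun h => by simpa using congrFun h 1) := by
  induction P with | h v hv => ?_
  simp only [Projectivization.mk_eq_mk_iff']
  by_cases hz : v 2 = 0
  · right
    by_cases hx : v 0 = 0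
    · exact .inr ⟨v 1, by ext i; fin_cases i <;> simp [hx, hz]⟩
    · exact .inl ⟨v 1 / v 0, v 0, by ext i; fin_cases i <;> simp [hz, mul_div_cancel₀ _ hx]⟩
  · exact .inl ⟨v 0 / v 2, v 1 / v 2, v 2,
      by ext i; fin_cases i <;> simp [mul_div_cancel₀ _ hz]⟩

end ProjectivePlane

lemma singularLocus_biquadraticSextic {k : Type*} [Field k] [NeZero (2 : k)] {s d : Polynomial k}
    (hs : s.natDegree = 4) (hd : d.natDegree ≤ 3) (hsep : (s ^ 2 - d ^ 2).Separable) :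
    singularLocus (biquadraticSextic s d) = {P : Projectivization k (Fin 3 → k) |
      P = .mk k ![0, 1, 0] (fun h => by simpa using congrFun h 1) ∨
      (d.coeff 3 = 0 ∧ P = .mk k ![1, 0, 0] (fun h => by simpa using congrFun h 0)) ∨
      ∃ ξ, d.eval ξ = 0 ∧ P = .mk k ![ξ, 0, 1] (fun h => by simpa using congrFun h 2)} := by
  have hF : (biquadraticSextic s d).IsHomogeneous 6 := isHomogeneous_biquadraticSextic
  ext P
  constructor
  · intro hP
    obtain ⟨x, y, rfl⟩ | ⟨y, rfl⟩ | rfl := projectivePlane_cases P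
    · rw [mk_mem_singularLocus_iff hF] at hP
      obtain rfl : y = 0 :=
        y_eq_zero_of_isSingularZero_biquadraticSextic hs.le hd hsep rfl hP
      rw [isSingularZero_biquadraticSextic_iff_of_y_eq_zero rfl, eval_xzForm_of_eq_one hd rfl] at hP
      exact .inr (.inr ⟨x, hP, rfl⟩)
    · rw [mk_mem_singularLocus_iff hF] at hP
      obtain rfl : y = 0 :=
        (x_eq_zero_or_y_eq_zero_of_isSingularZero_biquadraticSextic hs rfl hP).resolve_left
          one_ne_zero
      rw [isSingularZero_biquadraticSextic_iff_of_y_eq_zero rfl, eval_xzForm_of_eq_zero rfl] at hP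
      exact .inr (.inl ⟨by simpa using hP, rfl⟩)
    · exact .inl rfl
  · rintro (rfl | ⟨hd3, rfl⟩ | ⟨ξ, hξ, rfl⟩) <;> rw [mk_mem_singularLocus_iff hF]
    · exact isSingularZero_biquadraticSextic_of_x_eq_zero_of_z_eq_zero hs.le rfl rfl
    · rw [isSingularZero_biquadraticSextic_iff_of_y_eq_zero rfl, eval_xzForm_of_eq_zero rfl, hd3,
        zero_mul]
    · rwa [isSingularZero_biquadraticSextic_iff_of_y_eq_zero rfl, eval_xzForm_of_eq_one hd rfl]

section Quartic

variable {R : Type*} [CommRing R]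

/-- The monic quartic whose roots have elementary symmetric functions `e₁`, `e₂`, `e₃`, `e₄`. -/
noncomputable def monicQuartic (e₁ e₂ e₃ e₄ : R) : Polynomial R :=
  .X ^ 4 - .C e₁ * .X ^ 3 + .C e₂ * .X ^ 2 - .C e₃ * .X + .C e₄

lemma prod_X_sub_C_eq_monicQuartic (a b c d : R) :
    (.X - .C a) * (.X - .C b) * (.X - .C c) * (.X - .C d) =
      monicQuartic (a + b + c + d) (a * b + a * c + a * d + b * c + b * d + c * d)
        (a * b * c + a * b * d + a * c * d + b * c * d) (a * b * c * d) := by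
  simp only [monicQuartic, map_add, map_mul]
  ring

lemma natDegree_monicQuartic_add_monicQuartic [NeZero (2 : R)] (a b c d a' b' c' d' : R) :
    (monicQuartic a b c d + monicQuartic a' b' c' d').natDegree = 4 := by
  rw [monicQuartic, monicQuartic]
  compute_degree!
  simpa only [one_add_one_eq_two] using two_ne_zero

lemma monicQuartic_sub_monicQuartic (a b c d a' b' c' d' : R) :
    monicQuartic a b c d - monicQuartic a' b' c' d' =
      Cubic.toPoly ⟨a' - a, b - b', c' - c, d - d'⟩ := by
  simp only [monicQuartic, Cubic.toPoly, map_sub]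
  ring

end Quartic

section Separable

variable {k : Type*} [Field k]

lemma separable_prod_map_X_sub_C {l : List k} (hl : l.Nodup) :
    (l.map fun a => Polynomial.X - Polynomial.C a).prod.Separable := by
  classical
  rw [← List.prod_toFinset _ hl, Polynomial.separable_prod_X_sub_C_iff']
  exact fun _ _ _ _ h => h

lemma separable_add_sq_sub_sub_sq [NeZero (2 : k)] {p q : Polynomial k} (h : (p * q).Separable) :
    ((p + q) ^ 2 - (q - p) ^ 2).Separable := by
  have h4 : IsUnit (Polynomial.C (2 ^ 2 : k)) :=
    Polynomial.isUnit_C.2 (pow_ne_zero 2 two_ne_zero).isUnit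
  convert h.unit_mul h4 using 1
  simp only [map_pow, map_ofNat]
  ring

end Separable

theorem stmt_11_general {k : Type*} [Field k] [NeZero (2 : k)]
    {α1 α2 α3 α4 β1 β2 β3 β4 : k}
    (hdist : ([α1, α2, α3, α4, β1, β2, β3, β4] : List k).Pairwise (· ≠ ·))
    {σ1 σ2 σ3 σ4 τ1 τ2 τ3 τ4 : k}
    (hσ1 : σ1 = α1 + α2 + α3 + α4)
    (hσ2 : σ2 = α1 * α2 + α1 * α3 + α1 * α4 + α2 * α3 + α2 * α4 + α3 * α4)
    (hσ3 : σ3 = α1 * α2 * α3 + α1 * α2 * α4 + α1 * α3 * α4 + α2 * α3 * α4)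
    (hσ4 : σ4 = α1 * α2 * α3 * α4)
    (hτ1 : τ1 = β1 + β2 + β3 + β4)
    (hτ2 : τ2 = β1 * β2 + β1 * β3 + β1 * β4 + β2 * β3 + β2 * β4 + β3 * β4)
    (hτ3 : τ3 = β1 * β2 * β3 + β1 * β2 * β4 + β1 * β3 * β4 + β2 * β3 * β4)
    (hτ4 : τ4 = β1 * β2 * β3 * β4)
    {φ1 φ2 : MvPolynomial (Fin 2) k}
    (hφ1 : φ1 = (X 0 - C α1) * (X 0 - C α2) * (X 0 - C α3) * (X 0 - C α4))
    (hφ2 : φ2 = (X 0 - C β1) * (X 0 - C β2) * (X 0 - C β3) * (X 0 - C β4))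
    {F : MvPolynomial (Fin 3) k} (hF : F.IsHomogeneous 6)
    (hFf : aeval ![(X 0 : MvPolynomial (Fin 2) k), X 1, 1] F =
      X 1 ^ 4 - C 2 * (φ1 + φ2) * X 1 ^ 2 + (φ1 - φ2) ^ 2) :
    singularLocus F = {P : Projectivization k (Fin 3 → k) |
      P = .mk k ![0, 1, 0] (fun h => by simpa using congrFun h 1) ∨
      (σ1 = τ1 ∧ P = .mk k ![1, 0, 0] (fun h => by simpa using congrFun h 0)) ∨
      ∃ ξ, (σ1 - τ1) * ξ ^ 3 - (σ2 - τ2) * ξ ^ 2 + (σ3 - τ3) * ξ - (σ4 - τ4) = 0 ∧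
        P = .mk k ![ξ, 0, 1] (fun h => by simpa using congrFun h 2)} := by
  set p := monicQuartic σ1 σ2 σ3 σ4 with hp
  set q := monicQuartic τ1 τ2 τ3 τ4 with hq
  rw [hσ1, hσ2, hσ3, hσ4, ← prod_X_sub_C_eq_monicQuartic] at hp
  rw [hτ1, hτ2, hτ3, hτ4, ← prod_X_sub_C_eq_monicQuartic] at hq
  have hsum : (p + q).natDegree = 4 := natDegree_monicQuartic_add_monicQuartic ..
  have hdiff : q - p = Cubic.toPoly ⟨σ1 - τ1, τ2 - σ2, σ3 - τ3, τ4 - σ4⟩ :=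
    monicQuartic_sub_monicQuartic ..
  have hdeg : (q - p).natDegree ≤ 3 := hdiff ▸ Polynomial.natDegree_cubic_le
  have hsep : ((p + q) ^ 2 - (q - p) ^ 2).Separable := by
    apply separable_add_sq_sub_sub_sq
    simpa [hp, hq, mul_assoc] using separable_prod_map_X_sub_C hdist
  have hpφ : p.toMvPolynomial 0 = φ1 := by simp [hp, hφ1]
  have hqφ : q.toMvPolynomial 0 = φ2 := by simp [hq, hφ2]
  have hFs : F = biquadraticSextic (p + q) (q - p) :=
    eq_biquadraticSextic hsum.le hdeg hF (by rw [hFf, map_add, map_sub, hpφ, hqφ, sub_sq_comm])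
  have heval (ξ : k) : (q - p).eval ξ =
      (σ1 - τ1) * ξ ^ 3 - (σ2 - τ2) * ξ ^ 2 + (σ3 - τ3) * ξ - (σ4 - τ4) := by
    simp only [hdiff, Cubic.toPoly, Polynomial.eval_add, Polynomial.eval_mul, Polynomial.eval_pow,
      Polynomial.eval_C, Polynomial.eval_X]
    ring
  have hcoeff : (q - p).coeff 3 = σ1 - τ1 := by rw [hdiff, Cubic.coeff_eq_a]
  simp only [hFs, singularLocus_biquadraticSextic hsum hdeg hsep, heval, hcoeff, sub_eq_zero]

/-- The singular locus of the projective sextic F = 0 is exactly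
{(0:1:0)} ∪ S∞ ∪ {(ξ:0:1) : h1(ξ) = 0}, where S∞ = {(1:0:0)} if σ1 = τ1 and
S∞ = ∅ otherwise. -/
theorem stmt_11
    {k : Type*} [Field k] [IsAlgClosed k]
    (p : ℕ) [CharP k p] (hp : p = 0 ∨ 5 ≤ p)
    (α1 α2 α3 α4 β1 β2 β3 β4 : k)
    (hdist : ([α1, α2, α3, α4, β1, β2, β3, β4] : List k).Pairwise (· ≠ ·))
    (σ1 σ2 σ3 σ4 τ1 τ2 τ3 τ4 : k)
    (hσ1 : σ1 = α1 + α2 + α3 + α4)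
    (hσ2 : σ2 = α1 * α2 + α1 * α3 + α1 * α4 + α2 * α3 + α2 * α4 + α3 * α4)
    (hσ3 : σ3 = α1 * α2 * α3 + α1 * α2 * α4 + α1 * α3 * α4 + α2 * α3 * α4)
    (hσ4 : σ4 = α1 * α2 * α3 * α4)
    (hτ1 : τ1 = β1 + β2 + β3 + β4)
    (hτ2 : τ2 = β1 * β2 + β1 * β3 + β1 * β4 + β2 * β3 + β2 * β4 + β3 * β4)
    (hτ3 : τ3 = β1 * β2 * β3 + β1 * β2 * β4 + β1 * β3 * β4 + β2 * β3 * β4)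
    (hτ4 : τ4 = β1 * β2 * β3 * β4)
    (φ1 φ2 f : MvPolynomial (Fin 2) k)
    (hφ1 : φ1 = (X 0 - C α1) * (X 0 - C α2) * (X 0 - C α3) * (X 0 - C α4))
    (hφ2 : φ2 = (X 0 - C β1) * (X 0 - C β2) * (X 0 - C β3) * (X 0 - C β4))
    (hf : f = X 1 ^ 4 - C 2 * (φ1 + φ2) * X 1 ^ 2 + (φ1 - φ2) ^ 2)
    (F : MvPolynomial (Fin 3) k)
    (hFhom : F.IsHomogeneous 6)
    (hFf : aeval ![(X 0 : MvPolynomial (Fin 2) k), X 1, 1] F = f)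
    (Sing : Set (Projectivization k (Fin 3 → k)))
    (hSing : ∀ P : Projectivization k (Fin 3 → k),
      P ∈ Sing ↔ (eval P.rep F = 0 ∧
        eval P.rep (pderiv 0 F) = 0 ∧
        eval P.rep (pderiv 1 F) = 0 ∧
        eval P.rep (pderiv 2 F) = 0))
    (h1 : k → k)
    (hh1 : ∀ x : k, h1 x = (σ1 - τ1) * x ^ 3 - (σ2 - τ2) * x ^ 2 + (σ3 - τ3) * x - (σ4 - τ4)) :
    Sing = {P : Projectivization k (Fin 3 → k) |
      P = Projectivization.mk k (![0, 1, 0] : Fin 3 → k)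
            (by intro hc; simpa using congrFun hc 1)
      ∨ (σ1 = τ1 ∧ P = Projectivization.mk k (![1, 0, 0] : Fin 3 → k)
            (by intro hc; simpa using congrFun hc 0))
      ∨ (∃ ξ : k, h1 ξ = 0 ∧ P = Projectivization.mk k (![ξ, 0, 1] : Fin 3 → k)
            (by intro hc; simpa using congrFun hc 2))} := by
  have hp2 : ¬p ∣ 2 := by
    obtain rfl | hp := hp
    · norm_num
    · exact Nat.not_dvd_of_pos_of_lt two_pos (by lia)
  have : NeZero (2 : k) := mod_cast NeZero.of_not_dvd k hp2
  obtain rfl : Sing = singularLocus F := by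
    ext P
    simp [hSing, singularLocus, IsSingularZero, Fin.forall_fin_succ]
  simp only [hh1]
  exact stmt_11_general hdist hσ1 hσ2 hσ3 hσ4 hτ1 hτ2 hτ3 hτ4 hφ1 hφ2 hFhom (hFf.trans hf)
end
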